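/- Let p be prime, k ∈ ℕ coprime to p, and r the multiplicative order of p in (ℤ/kℤ)^×. If u ∈ ℕ is relatively prime to r and γ_p(k) ≤ p^u, then v(p,k) ≤ 2(p^u − 1) + [γ_p(k) = p^u]. -/

import Mathlib

noncomputable def waring (F : Type*) [Field F] (k : ℕ) : ℕ∞ :=
  sInf {s : ℕ∞ | ∃ n : ℕ, s = n ∧
    ∀ f : Polynomial F, ∃ y : Fin n → Polynomial F, f = ∑ i, y i ^ k}

/-!
Write `q = p ^ u`. If `N = ∑ cᵢ q ^ eᵢ` with `∑ cᵢ ≤ q`, then for `a` in `𝔽_q` the power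
`(1 + a x) ^ N` is the product of the factors `(1 + a x ^ (q ^ eᵢ)) ^ cᵢ`, a polynomial in `a` of
degree at most `q`. Averaging it over `𝔽_qˣ` against `a⁻¹` isolates the coefficients of `a` and
`a ^ q`, so that `q - 1` scalar multiples of `N`-th powers add up to
`const - ∑ cᵢ x ^ (q ^ eᵢ) - [∑ cᵢ = q] x ^ N`.
If all but one of the `eᵢ` are `1` modulo `M ≥ 2` and the remaining one is `0`, then subtracting
`b ^ (-q)` times the same expression at `b x`, where `b ∈ 𝔽_{q ^ M} \ 𝔽_q`, cancels every
`x ^ (q ^ eᵢ)` except the linear term. Hence `2 (q - 1)` scalar multiples of `N`-th powers, and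
one more when `∑ cᵢ = q`, represent every element. Finally `u` is invertible modulo the order `r`
of `p` modulo `k`, so in the base `p` expansion of `k` each `p ^ i` may be replaced modulo `k` by
some `q ^ e` with `e` equal to `1` modulo `M = r + 1`; this makes `N` a multiple of `k`, and over a
separably closed field scalar multiples of `N`-th powers are `k`-th powers.
-/

open Polynomial hiding smul_pow
open Finset

/-- `a` is a sum of `n` `k`-th powers; the Waring number asks for the least `n` that works for
every `a`. -/
def IsSumOfPows {A : Type*} [CommSemiring A] (k n : ℕ) (a : A) : Prop :=
  ∃ y : Fin n → A, a = ∑ i, y i ^ k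

namespace IsSumOfPows

section CommSemiring

variable {A : Type*} [CommSemiring A] {k : ℕ}

lemma pow (y : A) : IsSumOfPows k 1 (y ^ k) :=
  ⟨fun _ ↦ y, by simp⟩

lemma add {m n : ℕ} {a b : A} (ha : IsSumOfPows k m a) (hb : IsSumOfPows k n b) :
    IsSumOfPows k (m + n) (a + b) := by
  obtain ⟨y, rfl⟩ := ha
  obtain ⟨z, rfl⟩ := hb
  exact ⟨Fin.append y z, by simp [Fin.sum_univ_add]⟩

lemma sum {ι : Type*} (s : Finset ι) {g : ι → A} (h : ∀ i ∈ s, IsSumOfPows k 1 (g i)) :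
    IsSumOfPows k #s (∑ i ∈ s, g i) := by
  induction s using Finset.cons_induction with
  | empty => rw [card_empty, sum_empty]; exact ⟨0, by simp⟩
  | cons i s hi ih =>
    rw [sum_cons, card_cons, add_comm #s]
    exact (h i (mem_cons_self i s)).add (ih fun j hj ↦ h j (mem_cons_of_mem hj))

end CommSemiring

section IsSepClosed

variable {F A : Type*} [Field F] [IsSepClosed F] [CommRing A] [Algebra F A] {k : ℕ}
  [NeZero (k : F)]

lemma smul {n : ℕ} {a : A} (h : IsSumOfPows k n a) (c : F) : IsSumOfPows k n (c • a) := by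
  obtain ⟨y, rfl⟩ := h
  obtain ⟨z, rfl⟩ := IsSepClosed.exists_pow_nat_eq c k
  exact ⟨fun i ↦ z • y i, by simp only [smul_pow, smul_sum]⟩

lemma smul_pow_of_dvd {N : ℕ} (hN : k ∣ N) (c : F) (y : A) : IsSumOfPows k 1 (c • y ^ N) := by
  obtain ⟨l, rfl⟩ := hN
  rw [mul_comm, pow_mul]
  exact (pow (y ^ l)).smul c

end IsSepClosed

end IsSumOfPows

section ProdOneAddMulX

variable {R ι : Type*} [CommSemiring R] (s : Finset ι) (c : ι → ℕ) (y : ι → R)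

lemma natDegree_one_add_C_mul_X_pow_le (z : R) (n : ℕ) : ((1 + C z * X) ^ n).natDegree ≤ n := by
  compute_degree

lemma coeff_one_one_add_C_mul_X_pow (z : R) (n : ℕ) : ((1 + C z * X) ^ n).coeff 1 = n * z := by
  induction n with
  | zero => simp [coeff_one]
  | succ n ih =>
    simp [pow_succ, mul_coeff_one, ih, coeff_one, coeff_zero_eq_eval_zero, add_one_mul, add_comm]

lemma coeff_self_one_add_C_mul_X_pow (z : R) (n : ℕ) : ((1 + C z * X) ^ n).coeff n = z ^ n := by
  have hd : (1 + C z * X).natDegree ≤ 1 := by compute_degree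
  simpa [coeff_one] using coeff_pow_of_natDegree_le (m := n) hd

lemma natDegree_prod_one_add_C_mul_X_pow_le :
    (∏ i ∈ s, (1 + C (y i) * X) ^ c i).natDegree ≤ ∑ i ∈ s, c i :=
  (natDegree_prod_le s _).trans
    (sum_le_sum fun i _ ↦ natDegree_one_add_C_mul_X_pow_le (y i) (c i))

lemma coeff_zero_prod_one_add_C_mul_X_pow :
    (∏ i ∈ s, (1 + C (y i) * X) ^ c i).coeff 0 = 1 := by
  simp [coeff_zero_eq_eval_zero, eval_prod]

lemma coeff_one_prod_one_add_C_mul_X_pow :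
    (∏ i ∈ s, (1 + C (y i) * X) ^ c i).coeff 1 = ∑ i ∈ s, c i * y i := by
  induction s using Finset.cons_induction with
  | empty => simp [coeff_one]
  | cons i s hi ih =>
    rw [prod_cons, sum_cons, mul_coeff_one, ih, coeff_one_one_add_C_mul_X_pow,
      coeff_zero_prod_one_add_C_mul_X_pow]
    simp [coeff_zero_eq_eval_zero, add_comm]

lemma coeff_sum_prod_one_add_C_mul_X_pow :
    (∏ i ∈ s, (1 + C (y i) * X) ^ c i).coeff (∑ i ∈ s, c i) = ∏ i ∈ s, y i ^ c i := by
  induction s using Finset.cons_induction with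
  | empty => simp
  | cons i s hi ih =>
    rw [prod_cons, sum_cons, prod_cons,
      coeff_mul_add_eq_of_natDegree_le (natDegree_one_add_C_mul_X_pow_le _ _)
        (natDegree_prod_one_add_C_mul_X_pow_le s c y),
      coeff_self_one_add_C_mul_X_pow, ih]

end ProdOneAddMulX

lemma pow_eq_self_of_pow_sub_one_eq_one {M : Type*} [Monoid M] {a : M} {q : ℕ} (hq : q ≠ 0)
    (ha : a ^ (q - 1) = 1) : a ^ q = a := by
  rw [← Nat.sub_one_add_one hq, pow_succ, ha, one_mul]

lemma pow_pow_eq_self {M : Type*} [Monoid M] {a : M} {m : ℕ} (h : a ^ m = a) (e : ℕ) :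
    a ^ m ^ e = a := by
  induction e with
  | zero => simp
  | succ e ih => rw [pow_succ, pow_mul, ih, h]

section RootsOfUnity

variable {F A : Type*} [Field F] [CommRing A] [Algebra F A]

lemma sum_range_pow_pow_of_isPrimitiveRoot {ω : F} {n i : ℕ} (hω : IsPrimitiveRoot ω n)
    (hi : i < n) : ∑ j ∈ range n, (ω ^ j) ^ i = if i = 0 then (n : F) else 0 := by
  split_ifs with hi0
  · simp [hi0]
  · simp_rw [← pow_mul, mul_comm _ i, pow_mul]
    rw [geom_sum_eq (hω.pow_ne_one_of_pos_of_lt hi0 hi), pow_right_comm, hω.pow_eq_one]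
    simp

lemma sum_inv_smul_eval_of_isPrimitiveRoot {ω : F} {n : ℕ} (hω : IsPrimitiveRoot ω n)
    (hn : n ≠ 0) {h : A[X]} (hd : h.natDegree ≤ n + 1) :
    ∑ j ∈ range n, (ω ^ j)⁻¹ • h.eval (algebraMap F A (ω ^ j)) =
      (∑ j ∈ range n, (ω ^ j)⁻¹) • h.coeff 0 + n * (h.coeff 1 + h.coeff (n + 1)) := by
  have hω0 (j : ℕ) : ω ^ j ≠ 0 := pow_ne_zero j (hω.ne_zero hn)
  have expand (j : ℕ) : (ω ^ j)⁻¹ • h.eval (algebraMap F A (ω ^ j)) =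
      (ω ^ j)⁻¹ • h.coeff 0 + ∑ i ∈ range n, (ω ^ j) ^ i • h.coeff (i + 1) +
        (ω ^ j) ^ n • h.coeff (n + 1) := by
    have shift (i : ℕ) : (ω ^ j)⁻¹ • (h.coeff (i + 1) * algebraMap F A (ω ^ j) ^ (i + 1)) =
        (ω ^ j) ^ i • h.coeff (i + 1) := by
      rw [← map_pow, mul_comm, ← Algebra.smul_def, smul_smul, pow_succ',
        inv_mul_cancel_left₀ (hω0 j)]
    rw [eval_eq_sum_range' (Nat.lt_succ_of_le hd), sum_range_succ', sum_range_succ]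
    simp only [smul_add, smul_sum, shift, pow_zero, mul_one]
    ring
  have hωn (j : ℕ) : (ω ^ j) ^ n = 1 := by rw [pow_right_comm, hω.pow_eq_one, one_pow]
  have middle : ∑ j ∈ range n, ∑ i ∈ range n, (ω ^ j) ^ i • h.coeff (i + 1) = n * h.coeff 1 := by
    rw [sum_comm, sum_eq_single_of_mem 0 (by simpa [Nat.pos_iff_ne_zero] using hn)]
    · simp
    · intro i hi hi0
      rw [← sum_smul, sum_range_pow_pow_of_isPrimitiveRoot hω (mem_range.1 hi), if_neg hi0,
        zero_smul]
  simp_rw [expand, sum_add_distrib, middle, hωn, ← sum_smul]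
  simp [mul_add, add_assoc, Nat.cast_smul_eq_nsmul]

end RootsOfUnity

lemma natCast_char_pow_sub_one {R : Type*} [Ring R] {p : ℕ} [NeZero p] [CharP R p] {m : ℕ}
    (hm : m ≠ 0) : ((p ^ m - 1 : ℕ) : R) = -1 := by
  rw [Nat.cast_pred (pow_pos (NeZero.pos p) m)]
  simp [hm]

section IsSepClosed

variable (F : Type*) [Field F] [IsSepClosed F] (p : ℕ) [Fact p.Prime] [CharP F p]

lemma exists_isPrimitiveRoot_prime_pow_sub_one {m : ℕ} (hm : m ≠ 0) :
    ∃ ζ : F, IsPrimitiveRoot ζ (p ^ m - 1) := by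
  have : NeZero ((p ^ m - 1 : ℕ) : F) := ⟨by simp [natCast_char_pow_sub_one hm]⟩
  exact HasEnoughRootsOfUnity.exists_primitiveRoot F _

lemma exists_pow_pow_eq_self_and_pow_ne_self {u M : ℕ} (hu : u ≠ 0) (hM : 2 ≤ M) :
    ∃ b : F, b ^ (p ^ u) ^ M = b ∧ b ^ p ^ u ≠ b := by
  have hq : 1 < p ^ u := Nat.one_lt_pow hu (Fact.out : p.Prime).one_lt
  have hqM : p ^ u < (p ^ u) ^ M := lt_self_pow₀ hq hM
  obtain ⟨b, hb⟩ := exists_isPrimitiveRoot_prime_pow_sub_one F p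
    (mul_ne_zero hu (by lia : M ≠ 0))
  rw [pow_mul] at hb
  refine ⟨b, pow_eq_self_of_pow_sub_one_eq_one (by lia) hb.pow_eq_one, fun h ↦ ?_⟩
  have hb0 : b ≠ 0 := hb.ne_zero (by lia)
  refine hb.pow_ne_one_of_pos_of_lt (l := p ^ u - 1) (by lia) (by lia) ?_
  rw [← mul_left_inj' hb0, ← pow_succ, Nat.sub_one_add_one (by lia), h, one_mul]

end IsSepClosed

lemma one_add_smul_pow_sum_mul_pow {R A ι : Type*} [CommSemiring R] [CommSemiring A]
    [Algebra R A] {p u : ℕ} [Fact p.Prime] [CharP A p] (s : Finset ι) (c e : ι → ℕ) {a : R}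
    (ha : a ^ p ^ u = a) (x : A) :
    (1 + a • x) ^ (∑ i ∈ s, c i * (p ^ u) ^ e i) =
      (∏ i ∈ s, (1 + C (x ^ (p ^ u) ^ e i) * X) ^ c i).eval (algebraMap R A a) := by
  rw [eval_prod, ← prod_pow_eq_pow_sum]
  refine prod_congr rfl fun i _ ↦ ?_
  have frobenius : (1 + a • x) ^ (p ^ u) ^ e i = 1 + a • x ^ (p ^ u) ^ e i := by
    rw [← pow_mul, add_pow_char_pow, one_pow, smul_pow, pow_mul, pow_pow_eq_self ha]
  rw [mul_comm, pow_mul, frobenius]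
  simp [Algebra.smul_def, mul_comm]

section TwistedPowSum

variable {F A : Type*} [Field F] [CommRing A] [Algebra F A]

/-- The sum of `a⁻¹ (1 + a x) ^ N` over the first `n` powers `a` of `ω`. If `ω` is a primitive
`n`-th root of unity, this is `n` times the first Fourier coefficient of `a ↦ (1 + a x) ^ N` on the
group of `n`-th roots of unity. -/
def twistedPowSum (ω : F) (n N : ℕ) (x : A) : A :=
  ∑ j ∈ range n, (ω ^ j)⁻¹ • (1 + ω ^ j • x) ^ N

lemma isSumOfPows_twistedPowSum [IsSepClosed F] {k : ℕ} [NeZero (k : F)] {N : ℕ} (hN : k ∣ N)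
    (ω : F) (n : ℕ) (x : A) : IsSumOfPows k n (twistedPowSum ω n N x) := by
  simpa [twistedPowSum] using IsSumOfPows.sum (range n) fun j _ ↦
    IsSumOfPows.smul_pow_of_dvd hN (ω ^ j)⁻¹ (1 + ω ^ j • x)

variable {p u : ℕ} [Fact p.Prime] [CharP A p] {ι : Type*} {s : Finset ι} {c : ι → ℕ}

lemma twistedPowSum_sum_mul_pow (e : ι → ℕ) (hu : u ≠ 0) {ω : F}
    (hω : IsPrimitiveRoot ω (p ^ u - 1)) (hc : ∑ i ∈ s, c i ≤ p ^ u) (x : A) :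
    twistedPowSum ω (p ^ u - 1) (∑ i ∈ s, c i * (p ^ u) ^ e i) x =
      algebraMap F A (∑ j ∈ range (p ^ u - 1), (ω ^ j)⁻¹) - ∑ i ∈ s, c i * x ^ (p ^ u) ^ e i -
        if ∑ i ∈ s, c i = p ^ u then x ^ (∑ i ∈ s, c i * (p ^ u) ^ e i) else 0 := by
  have hq : 1 < p ^ u := Nat.one_lt_pow hu (Fact.out : p.Prime).one_lt
  have hq1 : p ^ u - 1 + 1 = p ^ u := Nat.sub_one_add_one (by lia)
  have hωq (j : ℕ) : (ω ^ j) ^ p ^ u = ω ^ j :=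
    pow_eq_self_of_pow_sub_one_eq_one (by lia) (by rw [pow_right_comm, hω.pow_eq_one, one_pow])
  have hd := natDegree_prod_one_add_C_mul_X_pow_le s c fun i ↦ x ^ (p ^ u) ^ e i
  have top : (∏ i ∈ s, (1 + C (x ^ (p ^ u) ^ e i) * X) ^ c i).coeff (p ^ u) =
      if ∑ i ∈ s, c i = p ^ u then x ^ (∑ i ∈ s, c i * (p ^ u) ^ e i) else 0 := by
    split_ifs with h
    · rw [← prod_pow_eq_pow_sum, ← h, coeff_sum_prod_one_add_C_mul_X_pow]
      exact prod_congr rfl fun i _ ↦ by rw [← pow_mul, mul_comm, h]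
    · exact coeff_eq_zero_of_natDegree_lt (by lia)
  simp_rw [twistedPowSum, one_add_smul_pow_sum_mul_pow s c e (hωq _) x]
  rw [sum_inv_smul_eval_of_isPrimitiveRoot hω (by lia) (by lia), hq1, top,
    coeff_zero_prod_one_add_C_mul_X_pow, coeff_one_prod_one_add_C_mul_X_pow,
    natCast_char_pow_sub_one hu, Algebra.algebraMap_eq_smul_one]
  ring

end TwistedPowSum

section Representation

variable {F A : Type*} [Field F] [CommRing A] [Algebra F A]
  {ι : Type*} {s : Finset ι} {i₀ : ι} {c e : ι → ℕ}

lemma sum_mul_pow_sub_inv_smul_sum_mul_smul_pow {q M : ℕ} {b : F}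
    (hb0 : b ^ q ≠ 0) (hbM : b ^ q ^ M = b) (hi₀ : i₀ ∈ s) (he₀ : e i₀ = 0)
    (he : ∀ i ∈ s, i ≠ i₀ → ∃ t, e i = M * t + 1) (x : A) :
    ∑ i ∈ s, c i * x ^ q ^ e i - (b ^ q)⁻¹ • ∑ i ∈ s, c i * (b • x) ^ q ^ e i =
      (c i₀ * (1 - (b ^ q)⁻¹ * b)) • x := by
  have term (i : ι) : c i * x ^ q ^ e i - (b ^ q)⁻¹ • (c i * (b • x) ^ q ^ e i) =
      (c i * (1 - (b ^ q)⁻¹ * b ^ q ^ e i)) • x ^ q ^ e i := by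
    simp only [Algebra.smul_def, map_mul, map_sub, map_one, map_natCast, map_pow]
    ring
  rw [smul_sum, ← sum_sub_distrib, sum_eq_single_of_mem i₀ hi₀]
  · rw [term, he₀, pow_zero, pow_one, pow_one]
  · intro i hi hne
    obtain ⟨t, ht⟩ := he i hi hne
    have hb : b ^ q ^ e i = b ^ q := by
      rw [ht, pow_succ, pow_mul, pow_mul, pow_pow_eq_self hbM]
    rw [term, hb, inv_mul_cancel₀ hb0, sub_self, mul_zero, zero_smul]

variable {p u M : ℕ} [Fact p.Prime] [CharP A p]

lemma twistedPowSum_sub_inv_smul_twistedPowSum (hu : u ≠ 0) {ω b : F}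
    (hω : IsPrimitiveRoot ω (p ^ u - 1)) (hb0 : b ^ p ^ u ≠ 0) (hbM : b ^ (p ^ u) ^ M = b)
    (hi₀ : i₀ ∈ s) (he₀ : e i₀ = 0) (he : ∀ i ∈ s, i ≠ i₀ → ∃ t, e i = M * t + 1)
    (hc : ∑ i ∈ s, c i ≤ p ^ u) {N : ℕ} (hN : N = ∑ i ∈ s, c i * (p ^ u) ^ e i) (x : A) :
    twistedPowSum ω (p ^ u - 1) N x - (b ^ p ^ u)⁻¹ • twistedPowSum ω (p ^ u - 1) N (b • x) =
      algebraMap F A ((1 - (b ^ p ^ u)⁻¹) * ∑ j ∈ range (p ^ u - 1), (ω ^ j)⁻¹) -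
        (c i₀ * (1 - (b ^ p ^ u)⁻¹ * b)) • x -
        if ∑ i ∈ s, c i = p ^ u then (1 - (b ^ p ^ u)⁻¹ * b ^ N) • x ^ N else 0 := by
  have linear := sum_mul_pow_sub_inv_smul_sum_mul_smul_pow (c := c) hb0 hbM hi₀ he₀ he x
  rw [hN, twistedPowSum_sum_mul_pow e hu hω hc, twistedPowSum_sum_mul_pow e hu hω hc, ← hN,
    ← linear]
  split_ifs <;>
  · simp only [Algebra.smul_def, mul_pow, map_mul, map_sub, map_one, map_pow]
    ring

theorem isSumOfPows_of_dvd_sum_mul_pow [IsSepClosed F] [CharP F p] {k : ℕ} [NeZero (k : F)]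
    (hu : u ≠ 0) (hM : 2 ≤ M) (hi₀ : i₀ ∈ s) (hc₀ : (c i₀ : F) ≠ 0) (he₀ : e i₀ = 0)
    (he : ∀ i ∈ s, i ≠ i₀ → ∃ t, e i = M * t + 1) (hc : ∑ i ∈ s, c i ≤ p ^ u)
    (hk : k ∣ ∑ i ∈ s, c i * (p ^ u) ^ e i) (f : A) :
    IsSumOfPows k (2 * (p ^ u - 1) + if ∑ i ∈ s, c i = p ^ u then 1 else 0) f := by
  obtain ⟨ω, hω⟩ := exists_isPrimitiveRoot_prime_pow_sub_one F p hu
  obtain ⟨b, hbM, hbq⟩ := exists_pow_pow_eq_self_and_pow_ne_self F p hu hM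
  have hb0 : b ^ p ^ u ≠ 0 := fun h ↦ hbq (h.trans (eq_zero_of_pow_eq_zero h).symm)
  have ha : c i₀ * (1 - (b ^ p ^ u)⁻¹ * b) ≠ 0 :=
    mul_ne_zero hc₀ <| sub_ne_zero.2 fun h ↦ hbq ((inv_mul_eq_one₀ hb0).1 h.symm)
  set N := ∑ i ∈ s, c i * (p ^ u) ^ e i with hN
  have key := twistedPowSum_sub_inv_smul_twistedPowSum (A := A) hu hω hb0 hbM hi₀ he₀ he hc hN
  set d := (b ^ p ^ u)⁻¹
  set a := c i₀ * (1 - d * b)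
  set S := ∑ j ∈ range (p ^ u - 1), (ω ^ j)⁻¹
  let x : A := a⁻¹ • (algebraMap F A ((1 - d) * S) - f)
  have hx : a • x = algebraMap F A ((1 - d) * S) - f := smul_inv_smul₀ ha _
  have two_sums : IsSumOfPows k (2 * (p ^ u - 1))
      (f - if ∑ i ∈ s, c i = p ^ u then (1 - d * b ^ N) • x ^ N else 0) := by
    have h := (isSumOfPows_twistedPowSum hk ω (p ^ u - 1) x).add
      ((isSumOfPows_twistedPowSum hk ω (p ^ u - 1) (b • x)).smul (-d))
    rwa [neg_smul, ← sub_eq_add_neg, key, hx, sub_sub_cancel, ← two_mul] at h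
  split_ifs at two_sums ⊢
  · simpa using two_sums.add (IsSumOfPows.smul_pow_of_dvd hk (1 - d * b ^ N) x)
  · simpa using two_sums

end Representation

lemma exists_pow_mul_eq_pow_of_coprime_orderOf {G : Type*} [Monoid G] {g : G} {u : ℕ}
    (hg : IsOfFinOrder g) (hu : u.Coprime (orderOf g)) (i : ℕ) :
    ∃ t, g ^ (u * ((orderOf g + 1) * t + 1)) = g ^ i := by
  obtain ⟨v, -, hv⟩ := Nat.exists_mul_mod_eq_of_coprime i hu hg.orderOf_pos.ne'
  obtain ⟨r, hr⟩ := Nat.exists_eq_add_one.2 hg.orderOf_pos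
  refine ⟨v + r, pow_eq_pow_of_modEq ?_ (pow_orderOf_eq_one g)⟩
  calc u * ((orderOf g + 1) * (v + r) + 1)
      = u * v + orderOf g * (u * (v + r + 1)) := by rw [hr]; ring
    _ ≡ u * v [MOD orderOf g] := by simp [Nat.ModEq]
    _ ≡ i [MOD orderOf g] := hv

lemma exists_exponents_of_coprime_orderOf {G : Type*} [Monoid G] {g : G} {u : ℕ}
    (hg : IsOfFinOrder g) (hu : u.Coprime (orderOf g)) :
    ∃ e : ℕ → ℕ, e 0 = 0 ∧ (∀ i ≠ 0, ∃ t, e i = (orderOf g + 1) * t + 1) ∧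
      ∀ i, (g ^ u) ^ e i = g ^ i := by
  choose t ht using exists_pow_mul_eq_pow_of_coprime_orderOf hg hu
  refine ⟨fun i ↦ if i = 0 then 0 else (orderOf g + 1) * t i + 1, rfl,
    fun i hi ↦ ⟨t i, if_neg hi⟩, fun i ↦ ?_⟩
  rcases eq_or_ne i 0 with rfl | hi
  · simp
  · simp only [if_neg hi, ← pow_mul, ht]

section Digits

lemma ofDigits_eq_sum_fin (b : ℕ) (L : List ℕ) :
    Nat.ofDigits b L = ∑ i : Fin L.length, L[i] * b ^ (i : ℕ) := by
  simp [Nat.ofDigits_eq_sum_mapIdx, List.mapIdx_eq_ofFn, List.sum_ofFn]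

lemma dvd_sum_digits_mul_pow {k b q : ℕ} {e : ℕ → ℕ}
    (he : ∀ i, (q : ZMod k) ^ e i = (b : ZMod k) ^ i) :
    k ∣ ∑ i : Fin (Nat.digits b k).length, (Nat.digits b k)[i] * q ^ e i := by
  have hk := congrArg (Nat.cast : ℕ → ZMod k) (ofDigits_eq_sum_fin b (Nat.digits b k))
  rw [Nat.ofDigits_digits, ZMod.natCast_self] at hk
  rw [← ZMod.natCast_eq_zero_iff, hk]
  push_cast
  simp_rw [he]

lemma eq_zero_of_sum_digits_eq_zero {b n : ℕ} (h : (Nat.digits b n).sum = 0) : n = 0 := by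
  rw [← Nat.ofDigits_digits b n, ofDigits_eq_sum_fin]
  refine sum_eq_zero fun i _ ↦ mul_eq_zero_of_left ?_ _
  exact List.sum_eq_zero_iff.1 h _ (List.getElem_mem i.2)

lemma eq_one_of_not_dvd_of_sum_digits_le_one {b n : ℕ} (hb : 1 < b) (hbn : ¬ b ∣ n)
    (h : (Nat.digits b n).sum ≤ 1) : n = 1 := by
  have hn : 0 < n := Nat.pos_of_ne_zero fun h ↦ hbn (h ▸ dvd_zero b)
  rw [Nat.digits_def' hb hn, List.sum_cons] at h
  have hmod : n % b ≠ 0 := fun h ↦ hbn (Nat.dvd_of_mod_eq_zero h)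
  have hdiv : n / b = 0 := eq_zero_of_sum_digits_eq_zero (b := b) (by lia)
  rw [← Nat.mod_add_div n b, hdiv]
  lia

lemma digits_getElem_zero {b n : ℕ} (hb : 1 < b) (h : 0 < (Nat.digits b n).length) :
    (Nat.digits b n)[0] = n % b := by
  rw [← List.getD_eq_getElem _ 0 h, Nat.getD_digits n 0 hb, pow_zero, Nat.div_one]

end Digits

theorem waring_order_bound_general {F A : Type*} [Field F] [IsSepClosed F] [CommRing A]
    [Algebra F A] (p k u : ℕ) [Fact p.Prime] [CharP F p] (hcop : Nat.Coprime k p)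
    (hu : Nat.Coprime u (orderOf (p : ZMod k))) (hγ : (Nat.digits p k).sum ≤ p ^ u) (f : A) :
    IsSumOfPows k
      (2 * (p ^ u - 1) + if (Nat.digits p k).sum = p ^ u then 1 else 0) f := by
  have hp : 1 < p := (Fact.out : p.Prime).one_lt
  have hpk : ¬ p ∣ k := fun h ↦ hp.ne' (Nat.eq_one_of_dvd_coprimes hcop h dvd_rfl)
  rcases eq_or_ne u 0 with rfl | hu0
  · obtain rfl := eq_one_of_not_dvd_of_sum_digits_le_one hp hpk (by simpa using hγ)
    simpa [Nat.digits_of_lt p 1 one_ne_zero hp] using IsSumOfPows.pow (k := 1) f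
  rcases subsingleton_or_nontrivial A with _ | _
  · exact ⟨0, Subsingleton.elim _ _⟩
  have : CharP A p := charP_of_injective_algebraMap' F p
  have hkF : (k : F) ≠ 0 := by rwa [Ne, CharP.cast_eq_zero_iff F p]
  have : NeZero (k : F) := ⟨hkF⟩
  have : NeZero k := .of_neZero_natCast F
  have hfin : IsOfFinOrder (p : ZMod k) := ((ZMod.isUnit_iff_coprime p k).2 hcop.symm).isOfFinOrder
  obtain ⟨e, he₀, he, hpe⟩ := exists_exponents_of_coprime_orderOf hfin hu
  have hlen : 0 < (Nat.digits p k).length :=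
    List.length_pos_of_ne_nil (Nat.digits_ne_nil_iff_ne_zero.2 (NeZero.ne k))
  rw [← Fin.sum_univ_getElem] at hγ ⊢
  have hc₀ : ((Nat.digits p k)[0] : F) ≠ 0 := by
    rwa [digits_getElem_zero hp, ← CharP.cast_eq_mod F p]
  exact isSumOfPows_of_dvd_sum_mul_pow (s := univ) (i₀ := ⟨0, hlen⟩)
    (c := fun i : Fin _ ↦ (Nat.digits p k)[i]) (e := fun i ↦ e i) hu0
    (Nat.succ_le_succ hfin.orderOf_pos) (mem_univ _) hc₀ he₀
    (fun i _ hi ↦ he i fun h ↦ hi (Fin.ext h)) hγ (dvd_sum_digits_mul_pow (by simpa using hpe)) f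

theorem waring_order_bound (F : Type*) [Field F] [IsAlgClosed F]
    (p k u : ℕ) [Fact p.Prime] [CharP F p]
    (hcop : Nat.Coprime k p)
    (hu : Nat.Coprime u (orderOf ((p : ZMod k))))
    (hγ : (Nat.digits p k).sum ≤ p ^ u) :
    waring F k ≤ ((2 * (p ^ u - 1) + (if (Nat.digits p k).sum = p ^ u then 1 else 0) : ℕ) : ℕ∞) :=
  sInf_le ⟨_, rfl, waring_order_bound_general (F := F) p k u hcop hu hγ⟩
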